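/- Let X be a length space and Λ(X) its group of ρ-loops at a basepoint under cancelled concatenation, with metric d(c₁,c₂)=L(c₁)+L(c₂)−2L(c₁∧c₂). Then Λ(X) is a complete metric space: if (cᵢ) is Cauchy in Λ(X), the lengths L(cᵢ) converge to some L ≥ 0, the loops stabilize on every interval [0,L′] with L′ < L, and the limit loop defined by these stable values belongs to Λ(X). -/

import Mathlib

open Set

/-- An arclength-parameterized weakly normal rectifiable path (ρ-path) in a metric
space `X`.  The path is defined on `[0, len]`, extended constantly outside. -/
structure RPath (X : Type*) [MetricSpace X] where
  /-- the length of the path -/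
  len : ℝ
  len_nonneg : 0 ≤ len
  toFun : ℝ → X
  contOn : ContinuousOn toFun (Icc 0 len)
  /-- arclength parameterization: the length of the restriction to `[s,t]` is `t - s`. -/
  arclength : ∀ s t : ℝ, 0 ≤ s → s ≤ t → t ≤ len →
    eVariationOn toFun (Icc s t) = ENNReal.ofReal (t - s)
  clamp_left : ∀ t : ℝ, t ≤ 0 → toFun t = toFun 0
  clamp_right : ∀ t : ℝ, len ≤ t → toFun t = toFun len
  /-- weak normality: no nontrivial subsegment `[u,v]` with equal endpoints is
  null-homotopic in its own image rel endpoints. -/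
  weaklyNormal : ¬ ∃ u v : ℝ, 0 ≤ u ∧ u < v ∧ v ≤ len ∧ toFun u = toFun v ∧
    ∃ H : ℝ × ℝ → X, ContinuousOn H (Icc u v ×ˢ Icc 0 1) ∧
      (∀ t ∈ Icc u v, H (t, 0) = toFun t) ∧
      (∀ t ∈ Icc u v, H (t, 1) = toFun u) ∧
      (∀ s ∈ Icc (0:ℝ) 1, H (u, s) = toFun u ∧ H (v, s) = toFun v) ∧
      (∀ p ∈ Icc u v ×ˢ Icc (0:ℝ) 1, H p ∈ toFun '' Icc u v)

namespace RPath

variable {X : Type*} [MetricSpace X]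

/-- `c` starts at the point `p`. -/
def StartsAt (c : RPath X) (p : X) : Prop := c.toFun 0 = p

/-- `c` ends at the point `p`. -/
def EndsAt (c : RPath X) (p : X) : Prop := c.toFun c.len = p

/-- The length `L(c₁ ∧ c₂)` of the longest common initial segment of two paths. -/
noncomputable def wedgeLen (c₁ c₂ : RPath X) : ℝ :=
  sSup {b : ℝ | 0 ≤ b ∧ b ≤ c₁.len ∧ b ≤ c₂.len ∧ ∀ t ∈ Icc 0 b, c₁.toFun t = c₂.toFun t}

/-- The distance `d(c₁,c₂) = L(c₁) + L(c₂) - 2 L(c₁ ∧ c₂)`. -/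
noncomputable def rhoDist (c₁ c₂ : RPath X) : ℝ :=
  c₁.len + c₂.len - 2 * wedgeLen c₁ c₂

end RPath

/-- A length space: a metric space with at least two points in which any two points
are joined by paths of length arbitrarily close to the distance between them. -/
def IsLengthSpace (X : Type*) [MetricSpace X] : Prop :=
  (∃ x y : X, x ≠ y) ∧
  ∀ x y : X, ∀ ε : ℝ, 0 < ε → ∃ (c : ℝ → X) (b : ℝ), 0 ≤ b ∧
    ContinuousOn c (Icc 0 b) ∧ c 0 = x ∧ c b = y ∧
    eVariationOn c (Icc 0 b) < ENNReal.ofReal (dist x y + ε)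

open Filter

/-!
The lengths of a Cauchy sequence converge to some `L`, and the paths stabilize on `[0, l]` for each
`l < L`. The stable values extend continuously to `L` and have unit speed, so only weak normality
of the limit curve is at stake. Each segment `[a, b]` with `b < L` lies in a member of the
sequence, hence it suffices that a curve which contracts on `[u, v]` within its own image also does
so on some `[a, b]` with `u < a < b < v`.

View the contraction as a map `H` on a rectangle and call two parameters cancelled if a connected
set in a fibre of `H` joins the corresponding points of the bottom edge. The image has finite
one-dimensional Hausdorff measure, so almost every sphere around a point meets it in a totally
disconnected set. If two cancelled pairs have distinct images, a crossing argument in the rectangle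
gives a connected set in the preimage of such a sphere, separating the pairs; `H` is constant on
it, so it cancels a further pair in between. Applied to the pairs `(u, v)` and `(q, q)` this gives
a cancelled pair `(a, b)`, and the same betweenness property makes the retreat from `[a, b]` along
cancelled pairs continuous, which contracts `[a, b]` within its image.
-/

section Crossing

variable {Y : Type*} [TopologicalSpace Y]

theorem sub_log_eq_sub_log_of_isPreconnected {F l : Y → ℂ} {S : Set Y} (hS : IsPreconnected S)
    (hF : ContinuousOn F S) (hl : ContinuousOn l S) (hlF : ∀ z ∈ S, Complex.exp (l z) = F z)
    {κ : ℂ} (hκ : κ ≠ 0) (hslit : ∀ z ∈ S, κ * F z ∈ Complex.slitPlane)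
    {z w : Y} (hz : z ∈ S) (hw : w ∈ S) :
    l z - Complex.log (κ * F z) = l w - Complex.log (κ * F w) := by
  have hexp (y : Y) (hy : y ∈ S) : Complex.exp (l y - Complex.log (κ * F y)) = κ⁻¹ := by
    have hFy : F y ≠ 0 := hlF y hy ▸ Complex.exp_ne_zero _
    rw [Complex.exp_sub, hlF y hy, Complex.exp_log (mul_ne_zero hκ hFy)]
    field_simp
  exact Complex.isCoveringMap_exp.constOn_of_comp (g := fun y => l y - Complex.log (κ * F y)) hS
    (hl.sub ((continuousOn_const.mul hF).clog hslit))
    (fun x hx y hy => Subtype.ext ((hexp x hx).trans (hexp y hy).symm)) hz hw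

theorem neg_I_mul_mem_slitPlane {z : ℂ} (h : z.re = 0 → 0 < z.im) :
    -Complex.I * z ∈ Complex.slitPlane := by
  rw [Complex.mem_slitPlane_iff]
  by_cases hre : z.re = 0
  · exact Or.inl (by simpa using h hre)
  · exact Or.inr (by simpa using hre)

theorem I_mul_mem_slitPlane {z : ℂ} (h : z.re = 0 → z.im < 0) :
    Complex.I * z ∈ Complex.slitPlane := by
  simpa using neg_I_mul_mem_slitPlane (z := -z) (by simpa using h)

theorem exists_continuous_exp_comp_eq [SimplyConnectedSpace Y] [LocallyPathConnectedSpace Y]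
    {F : Y → ℂ} (hF : Continuous F) (hF0 : ∀ z, F z ≠ 0) :
    ∃ l : Y → ℂ, Continuous l ∧ ∀ z, Complex.exp (l z) = F z := by
  obtain ⟨z₀⟩ : Nonempty Y := inferInstance
  obtain ⟨l, ⟨-, hl⟩, -⟩ := Complex.isCoveringMapOn_exp.existsUnique_continuousMap_lifts
    ⟨F, hF⟩ (Complex.exp_log (hF0 z₀)) hF0
  exact ⟨l, l.continuous, congrFun hl⟩

variable {K₁ K₂ A B : Set Y} {z₁ z₂ w₁ w₂ : Y}

theorem exists_common_zero_of_quadrilateral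
    [SimplyConnectedSpace Y] [LocallyPathConnectedSpace Y]
    {g θ : Y → ℝ} (hg : Continuous g) (hθ : Continuous θ)
    (hK₁ : IsPreconnected K₁) (hK₂ : IsPreconnected K₂)
    (hA : IsPreconnected A) (hB : IsPreconnected B)
    (hz₁ : z₁ ∈ K₁ ∩ A) (hw₁ : w₁ ∈ K₁ ∩ B) (hz₂ : z₂ ∈ K₂ ∩ A) (hw₂ : w₂ ∈ K₂ ∩ B)
    (hgK₁ : ∀ z ∈ K₁, 0 < g z) (hgK₂ : ∀ z ∈ K₂, g z < 0)
    (hθA : ∀ z ∈ A, g z = 0 → 0 < θ z) (hθB : ∀ z ∈ B, g z = 0 → θ z < 0) :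
    ∃ z, g z = 0 ∧ θ z = 0 := by
  by_contra! hne
  let F : Y → ℂ := fun z => g z + θ z * Complex.I
  have hF : Continuous F := by fun_prop
  have hre (z : Y) : (F z).re = g z := by simp [F]
  have him (z : Y) : (F z).im = θ z := by simp [F]
  have hF0 (z : Y) : F z ≠ 0 := fun h =>
    hne z (by rw [← hre, h, Complex.zero_re]) (by rw [← him, h, Complex.zero_im])
  obtain ⟨l, hl, hlF⟩ := exists_continuous_exp_comp_eq hF hF0
  have hconst {κ : ℂ} (hκ : κ ≠ 0) {S : Set Y} (hS : IsPreconnected S)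
      (hslit : ∀ z ∈ S, κ * F z ∈ Complex.slitPlane) {z w : Y} (hz : z ∈ S) (hw : w ∈ S) :=
    sub_log_eq_sub_log_of_isPreconnected hS hF.continuousOn hl.continuousOn
      (fun z _ => hlF z) hκ hslit hz hw
  have hnegI : -Complex.I ≠ 0 := neg_ne_zero.2 Complex.I_ne_zero
  have alongK₁ := hconst hnegI hK₁ (fun z hz => neg_I_mul_mem_slitPlane fun h =>
    absurd h (hre z ▸ (hgK₁ z hz).ne')) hz₁.1 hw₁.1
  have alongK₂ := hconst hnegI hK₂ (fun z hz => neg_I_mul_mem_slitPlane fun h =>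
    absurd h (hre z ▸ (hgK₂ z hz).ne)) hz₂.1 hw₂.1
  have alongA := hconst hnegI hA (fun z hz => neg_I_mul_mem_slitPlane fun h =>
    him z ▸ hθA z hz (hre z ▸ h)) hz₁.2 hz₂.2
  have alongB := hconst Complex.I_ne_zero hB (fun z hz => I_mul_mem_slitPlane fun h =>
    him z ▸ hθB z hz (hre z ▸ h)) hw₁.2 hw₂.2
  -- The branches of `log` along `A` and `B` differ by `-π * I` on `K₁` and by `π * I` on `K₂`.
  have jump : Complex.log (-Complex.I * F w₁) - Complex.log (Complex.I * F w₁)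
      = Complex.log (-Complex.I * F w₂) - Complex.log (Complex.I * F w₂) := by
    linear_combination alongK₁ - alongA - alongK₂ + alongB
  have im_pos : 0 < (Complex.I * F w₁).im := by simpa [hre] using hgK₁ w₁ hw₁.1
  have im_neg : (Complex.I * F w₂).im < 0 := by simpa [hre] using hgK₂ w₂ hw₂.1
  have jump_arg := congrArg Complex.im jump
  simp only [neg_mul, Complex.sub_im, Complex.log_im,
    Complex.arg_neg_eq_arg_sub_pi_of_im_pos im_pos,
    Complex.arg_neg_eq_arg_add_pi_of_im_neg im_neg] at jump_arg
  linarith [Real.pi_pos]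

theorem exists_isClopen_of_disjoint_connectedComponents [CompactSpace Y] [T2Space Y]
    (hA : IsClosed A) (hB : IsClosed B) (hAB : ∀ a ∈ A, ∀ b ∈ B, b ∉ connectedComponent a) :
    ∃ Z : Set Y, IsClopen Z ∧ A ⊆ Z ∧ Disjoint B Z := by
  have hmk := ConnectedComponents.continuous_coe (α := Y)
  have hdisj : ConnectedComponents.mk '' A ⊆ (ConnectedComponents.mk '' B)ᶜ := by
    rintro _ ⟨a, ha, rfl⟩ ⟨b, hb, hba⟩
    exact hAB a ha b hb (ConnectedComponents.coe_eq_coe'.1 hba)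
  obtain ⟨Z, hZ, hAZ, hZB⟩ := exists_clopen_of_closed_subset_open
    (hA.isCompact.image hmk).isClosed (hB.isCompact.image hmk).isClosed.isOpen_compl hdisj
  exact ⟨ConnectedComponents.mk ⁻¹' Z, hZ.preimage hmk, image_subset_iff.1 hAZ,
    disjoint_left.2 fun b hb hbZ => hZB hbZ (mem_image_of_mem _ hb)⟩

theorem exists_isClosed_partition_of_not_connected [T2Space Y] {E : Set Y} (hE : IsCompact E)
    (hA : IsClosed A) (hB : IsClosed B)
    (hAB : ∀ C ⊆ E, IsPreconnected C → (C ∩ A).Nonempty → ¬ (C ∩ B).Nonempty) :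
    ∃ E₁ E₂ : Set Y, IsClosed E₁ ∧ IsClosed E₂ ∧ Disjoint E₁ E₂ ∧ E = E₁ ∪ E₂ ∧
      E ∩ A ⊆ E₁ ∧ E ∩ B ⊆ E₂ := by
  have : CompactSpace E := isCompact_iff_compactSpace.1 hE
  have hval : Topology.IsClosedEmbedding (Subtype.val : E → Y) :=
    hE.isClosed.isClosedEmbedding_subtypeVal
  obtain ⟨Z, hZ, hAZ, hBZ⟩ := exists_isClopen_of_disjoint_connectedComponents
    (hA.preimage hval.continuous) (hB.preimage hval.continuous) fun a ha b hb hab =>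
      hAB (Subtype.val '' connectedComponent a) (Subtype.coe_image_subset E _)
        (isPreconnected_connectedComponent.image _ hval.continuous.continuousOn)
        ⟨a, ⟨a, mem_connectedComponent, rfl⟩, ha⟩ ⟨b, ⟨b, hab, rfl⟩, hb⟩
  refine ⟨Subtype.val '' Z, Subtype.val '' Zᶜ, hval.isClosedMap _ hZ.isClosed,
    hval.isClosedMap _ hZ.compl.isClosed,
    (disjoint_image_iff Subtype.val_injective).2 disjoint_compl_right, ?_, ?_, ?_⟩
  · rw [← image_union, union_compl_self, image_univ, Subtype.range_coe]
  · exact fun x hx => ⟨⟨x, hx.1⟩, hAZ hx.2, rfl⟩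
  · exact fun x hx => ⟨⟨x, hx.1⟩, disjoint_left.1 hBZ hx.2, rfl⟩

theorem exists_isPreconnected_zeros_of_quadrilateral
    [SimplyConnectedSpace Y] [LocallyPathConnectedSpace Y] [CompactSpace Y] [T2Space Y]
    {g : Y → ℝ} (hg : Continuous g)
    (hK₁ : IsPreconnected K₁) (hK₂ : IsPreconnected K₂)
    (hA : IsPreconnected A) (hAcl : IsClosed A) (hB : IsPreconnected B) (hBcl : IsClosed B)
    (hz₁ : z₁ ∈ K₁ ∩ A) (hw₁ : w₁ ∈ K₁ ∩ B) (hz₂ : z₂ ∈ K₂ ∩ A) (hw₂ : w₂ ∈ K₂ ∩ B)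
    (hgK₁ : ∀ z ∈ K₁, 0 < g z) (hgK₂ : ∀ z ∈ K₂, g z < 0) :
    ∃ C, IsPreconnected C ∧ (∀ z ∈ C, g z = 0) ∧ (C ∩ A).Nonempty ∧ (C ∩ B).Nonempty := by
  by_contra! hcon
  obtain ⟨E₁, E₂, hE₁, hE₂, hdisj, hE, hAE, hBE⟩ := exists_isClosed_partition_of_not_connected
    (isClosed_eq hg continuous_const : IsClosed {z | g z = 0}).isCompact hAcl hBcl
    fun C hCE hC hCA => not_nonempty_iff_eq_empty.2 (hcon C hC hCE hCA)
  obtain ⟨θ, hθ₂, hθ₁, -⟩ := exists_continuous_zero_one_of_isClosed hE₂ hE₁ hdisj.symm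
  have one_of_mem (z : Y) (hz : z ∈ E₁) : θ z = 1 := hθ₁ hz
  have zero_of_mem (z : Y) (hz : z ∈ E₂) : θ z = 0 := hθ₂ hz
  obtain ⟨z, hgz, hθz⟩ := exists_common_zero_of_quadrilateral (θ := fun z => θ z - 1 / 2) hg
    (by fun_prop) hK₁ hK₂ hA hB hz₁ hw₁ hz₂ hw₂ hgK₁ hgK₂
    (fun z hzA hgz => by norm_num [one_of_mem z (hAE ⟨hgz, hzA⟩)])
    (fun z hzB hgz => by norm_num [zero_of_mem z (hBE ⟨hgz, hzB⟩)])
  rcases hE.subset hgz with hz | hz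
  · norm_num [one_of_mem z hz] at hθz
  · norm_num [zero_of_mem z hz] at hθz

end Crossing

section Hausdorff

open MeasureTheory MeasureTheory.Measure

variable {X : Type*} [MetricSpace X] [MeasurableSpace X] [BorelSpace X]

theorem subsingleton_of_isPreconnected_of_hausdorffMeasure_one_eq_zero {C : Set X}
    (hC : IsPreconnected C) (hC0 : μH[1] C = 0) : C.Subsingleton := by
  intro x hx y hy
  have hL : LipschitzWith 1 fun z : X => dist z x := LipschitzWith.dist_left x
  have himage : volume ((fun z => dist z x) '' C) ≤ 0 := by
    simpa [hC0, hausdorffMeasure_real] using hL.hausdorffMeasure_image_le zero_le_one C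
  have hinterval : Icc (dist x x) (dist y x) ⊆ (fun z => dist z x) '' C :=
    hC.intermediate_value hx hy hL.continuous.continuousOn
  have hdist : ENNReal.ofReal (dist y x) ≤ 0 := by
    simpa using (measure_mono hinterval).trans himage
  exact (dist_le_zero.1 (ENNReal.ofReal_eq_zero.1 (nonpos_iff_eq_zero.1 hdist))).symm

theorem exists_sphere_inter_totallyDisconnected {S : Set X} (hS : MeasurableSet S)
    (hSfin : μH[1] S ≠ ⊤) (p : X) {ρ : ℝ} (hρ : 0 < ρ) :
    ∃ r ∈ Ioo 0 ρ, IsTotallyDisconnected (S ∩ Metric.sphere p r) := by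
  have hcountable : {r : ℝ | 0 < μH[1] (S ∩ Metric.sphere p r)}.Countable := by
    apply countable_meas_pos_of_disjoint_of_meas_iUnion_ne_top
    · exact fun r => hS.inter Metric.isClosed_sphere.measurableSet
    · intro r r' hrr'
      exact disjoint_left.2 fun x hx hx' => hrr' (hx.2.symm.trans hx'.2)
    · exact measure_ne_top_of_subset (iUnion_subset fun _ => inter_subset_left) hSfin
  obtain ⟨r, hr, hr0⟩ : ∃ r ∈ Ioo 0 ρ, r ∉ {r : ℝ | 0 < μH[1] (S ∩ Metric.sphere p r)} := by
    by_contra! hsub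
    have hnull := (hcountable.mono hsub).measure_zero volume
    rw [Real.volume_Ioo, ENNReal.ofReal_eq_zero] at hnull
    linarith
  refine ⟨r, hr, fun C hCS hC => ?_⟩
  exact subsingleton_of_isPreconnected_of_hausdorffMeasure_one_eq_zero hC
    (measure_mono_null hCS (by simpa using hr0))

theorem hausdorffMeasure_one_image_Icc_ne_top {f : ℝ → X} {u v : ℝ} {K : NNReal}
    (hf : LipschitzOnWith K f (Icc u v)) : μH[1] (f '' Icc u v) ≠ ⊤ := by
  refine ne_top_of_le_ne_top ?_ (hf.hausdorffMeasure_image_le zero_le_one)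
  rw [hausdorffMeasure_real, Real.volume_Icc]
  finiteness

end Hausdorff

section Fibres

variable {Y X : Type*} [TopologicalSpace Y]

/-- Two points are connected in a fibre of `H` if some connected set on which `H` is constant
contains both. -/
def ConnectedInFibre (H : Y → X) (z w : Y) : Prop :=
  ∃ C : Set Y, IsPreconnected C ∧ z ∈ C ∧ w ∈ C ∧ ∀ x ∈ C, H x = H z

namespace ConnectedInFibre

variable {H : Y → X} {z w x : Y}

theorem refl (H : Y → X) (z : Y) : ConnectedInFibre H z z :=
  ⟨{z}, isPreconnected_singleton, rfl, rfl, fun _ hx => congrArg H hx⟩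

theorem map_eq (h : ConnectedInFibre H z w) : H z = H w := by
  obtain ⟨C, -, -, hw, hC⟩ := h
  exact (hC w hw).symm

theorem trans (hzw : ConnectedInFibre H z w) (hwx : ConnectedInFibre H w x) :
    ConnectedInFibre H z x := by
  have hHzw := hzw.map_eq
  obtain ⟨C, hC, hzC, hwC, hHC⟩ := hzw
  obtain ⟨D, hD, hwD, hxD, hHD⟩ := hwx
  exact ⟨C ∪ D, hC.union w hwC hwD hD, Or.inl hzC, Or.inr hxD, fun y hy =>
    hy.elim (hHC y) fun hyD => (hHD y hyD).trans hHzw.symm⟩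

theorem of_continuous {T : Type*} [TopologicalSpace T] [PreconnectedSpace T] {γ : T → Y}
    (hγ : Continuous γ) {p : X} (hp : ∀ t, H (γ t) = p) (s t : T) :
    ConnectedInFibre H (γ s) (γ t) :=
  ⟨range γ, isPreconnected_range hγ, mem_range_self s, mem_range_self t, by
    rintro _ ⟨r, rfl⟩
    rw [hp r, hp s]⟩

end ConnectedInFibre

theorem isClosed_setOf_connectedInFibre [CompactSpace Y] [T2Space Y] [TopologicalSpace X]
    [T2Space X] {H : Y → X} (hH : Continuous H) :
    IsClosed {p : Y × Y | ConnectedInFibre H p.1 p.2} := by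
  refine isClosed_of_closure_subset fun ⟨z, w⟩ hzw => ?_
  have hHzw : H z = H w :=
    closure_minimal (fun _ h => h.map_eq)
      (isClosed_eq (hH.comp continuous_fst) (hH.comp continuous_snd)) hzw
  by_contra hnot
  obtain ⟨E₁, E₂, hE₁, hE₂, hdisj, hE, hzE, hwE⟩ := exists_isClosed_partition_of_not_connected
    (isClosed_eq hH continuous_const : IsClosed {x | H x = H z}).isCompact
    (isClosed_singleton (x := z)) (isClosed_singleton (x := w)) (by
      rintro C hCE hC ⟨_, hzC, rfl⟩ ⟨_, hwC, rfl⟩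
      exact hnot ⟨C, hC, hzC, hwC, hCE⟩)
  obtain ⟨U, V, hU, hV, hEU, hEV, hUV⟩ := normal_separation hE₁ hE₂ hdisj
  have hK : IsClosed (H '' (U ∪ V)ᶜ) := (hU.union hV).isClosed_compl.isCompact.image hH |>.isClosed
  have hzK : H z ∈ (H '' (U ∪ V)ᶜ)ᶜ := by
    rintro ⟨x, hx, hxz⟩
    exact hx ((union_subset_union hEU hEV) (hE.subset hxz))
  have hnhds : (H ⁻¹' (H '' (U ∪ V)ᶜ)ᶜ ∩ U) ×ˢ V ∈ nhds (z, w) :=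
    (((hK.isOpen_compl.preimage hH).inter hU).prod hV).mem_nhds
      ⟨⟨hzK, hEU (hzE ⟨rfl, rfl⟩)⟩, hEV (hwE ⟨hHzw.symm, rfl⟩)⟩
  obtain ⟨⟨x, y⟩, ⟨⟨hxK, hxU⟩, hyV⟩, C, hC, hxC, hyC, hCx⟩ := mem_closure_iff_nhds.1 hzw _ hnhds
  have hCUV : C ⊆ U ∪ V := fun x' hx' =>
    by_contra fun hx'K => hxK ⟨x', hx'K, hCx x' hx'⟩
  obtain ⟨x', -, hx'⟩ := hC U V hU hV hCUV ⟨x, hxC, hxU⟩ ⟨y, hyC, hyV⟩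
  exact disjoint_left.1 hUV hx'.1 hx'.2

open MeasureTheory MeasureTheory.Measure in
theorem exists_connectedInFibre_between [CompactSpace Y] [T2Space Y] [SimplyConnectedSpace Y]
    [LocallyPathConnectedSpace Y] [MetricSpace X] [MeasurableSpace X] [BorelSpace X]
    {H : Y → X} (hH : Continuous H) (hHfin : μH[1] (range H) ≠ ⊤)
    {A B : Set Y} (hA : IsPreconnected A) (hAcl : IsClosed A)
    (hB : IsPreconnected B) (hBcl : IsClosed B) {z₁ z₂ w₁ w₂ : Y}
    (hz₁ : z₁ ∈ A) (hz₂ : z₂ ∈ A) (hw₁ : w₁ ∈ B) (hw₂ : w₂ ∈ B)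
    (h₁ : ConnectedInFibre H z₁ w₁) (h₂ : ConnectedInFibre H z₂ w₂) (hne : H z₁ ≠ H z₂) :
    ∃ x ∈ A, ∃ y ∈ B, ConnectedInFibre H x y ∧ H x ≠ H z₁ ∧ H x ≠ H z₂ := by
  obtain ⟨r, ⟨hr0, hr⟩, hdisc⟩ := exists_sphere_inter_totallyDisconnected
    (isCompact_range hH).measurableSet hHfin (H z₂) (dist_pos.2 hne)
  obtain ⟨K₁, hK₁, hzK₁, hwK₁, hHK₁⟩ := h₁
  obtain ⟨K₂, hK₂, hzK₂, hwK₂, hHK₂⟩ := h₂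
  obtain ⟨C, hC, hCr, ⟨x, hxC, hxA⟩, y, hyC, hyB⟩ := exists_isPreconnected_zeros_of_quadrilateral
    (g := fun z => dist (H z) (H z₂) - r) (by fun_prop) hK₁ hK₂ hA hAcl hB hBcl
    ⟨hzK₁, hz₁⟩ ⟨hwK₁, hw₁⟩ ⟨hzK₂, hz₂⟩ ⟨hwK₂, hw₂⟩
    (fun z hz => by simpa only [hHK₁ z hz, sub_pos] using hr)
    (fun z hz => by simpa only [hHK₂ z hz, dist_self, zero_sub, neg_neg_iff_pos] using hr0)
  have hsphere (z : Y) (hz : z ∈ C) : dist (H z) (H z₂) = r := sub_eq_zero.1 (hCr z hz)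
  have hconst : (H '' C).Subsingleton :=
    hdisc _ (image_subset_iff.2 fun z hz => ⟨mem_range_self z, hsphere z hz⟩)
      (hC.image _ hH.continuousOn)
  refine ⟨x, hxA, y, hyB, ⟨C, hC, hxC, hyC, fun z hz =>
    hconst (mem_image_of_mem H hz) (mem_image_of_mem H hxC)⟩, ?_, ?_⟩ <;> intro heq
  · exact hr.ne' (heq ▸ hsphere x hxC)
  · exact hr0.ne (by simpa [heq] using hsphere x hxC)

end Fibres

section Cancellation

variable {X : Type*}

/-- A closed relation between parameters that have the same image under `f`, such that between
two related pairs with distinct images there is always a further related pair. It records which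
parameters a contraction of the curve `f` cancels against each other. -/
structure IsCancellation (f : ℝ → X) (R : ℝ → ℝ → Prop) : Prop where
  refl (s : ℝ) : R s s
  isClosed : IsClosed {p : ℝ × ℝ | R p.1 p.2}
  map_eq {s s' : ℝ} : R s s' → f s = f s'
  between {s s' q q' : ℝ} : R s s' → R q q' → f s ≠ f q → s < q →
    ∃ x ∈ Ioo s q, ∃ x' ∈ Ioo (min s' q') (max s' q'), R x x'

open MeasureTheory MeasureTheory.Measure in
theorem isCancellation_connectedInFibre {Y : Type*} [TopologicalSpace Y] [CompactSpace Y]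
    [T2Space Y] [SimplyConnectedSpace Y] [LocallyPathConnectedSpace Y] [MetricSpace X]
    [MeasurableSpace X] [BorelSpace X] {H : Y → X} (hH : Continuous H)
    (hHfin : μH[1] (range H) ≠ ⊤) {β : ℝ → Y} (hβ : Continuous β) :
    IsCancellation (H ∘ β) fun s s' => ConnectedInFibre H (β s) (β s') where
  refl s := .refl H (β s)
  isClosed := (isClosed_setOf_connectedInFibre hH).preimage (hβ.prodMap hβ)
  map_eq h := h.map_eq
  between {s s' q q'} hs hq hne hsq := by
    have hclosed {K : Set ℝ} (hK : IsCompact K) : IsClosed (β '' K) := (hK.image hβ).isClosed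
    obtain ⟨_, ⟨x, hx, rfl⟩, _, ⟨x', hx', rfl⟩, hxx', hxs, hxq⟩ :=
      exists_connectedInFibre_between hH hHfin
        (isPreconnected_Icc.image β hβ.continuousOn) (hclosed isCompact_Icc)
        (isPreconnected_uIcc.image β hβ.continuousOn) (hclosed isCompact_uIcc)
        (mem_image_of_mem β (left_mem_Icc.2 hsq.le)) (mem_image_of_mem β (right_mem_Icc.2 hsq.le))
        (mem_image_of_mem β (left_mem_uIcc (a := s') (b := q')))
        (mem_image_of_mem β right_mem_uIcc) hs hq hne
    have x_ne_s : x ≠ s := fun h => hxs (h ▸ rfl)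
    have x_ne_q : x ≠ q := fun h => hxq (h ▸ rfl)
    have x'_ne_s' : x' ≠ s' := fun h => hxs (hxx'.map_eq.trans (h ▸ hs.map_eq.symm))
    have x'_ne_q' : x' ≠ q' := fun h => hxq (hxx'.map_eq.trans (h ▸ hq.map_eq.symm))
    refine ⟨x, ⟨hx.1.lt_of_ne' x_ne_s, hx.2.lt_of_ne x_ne_q⟩, x',
      ⟨hx'.1.lt_of_ne' ?_, hx'.2.lt_of_ne ?_⟩, hxx'⟩
    · rcases min_choice s' q' with h | h <;> rwa [h]
    · rcases max_choice s' q' with h | h <;> rwa [h]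

/-- The parameters `s ≤ min z.1 z.2` in `[a, b]` that `R` cancels against a parameter in
`[z.1, b]`. Following the largest of them while `z.2` decreases from `b` to `a` contracts the
curve. -/
def leftEnds (R : ℝ → ℝ → Prop) (a b : ℝ) (z : ℝ × ℝ) : Set ℝ :=
  {s ∈ Icc a (min z.1 z.2) | ∃ s' ∈ Icc z.1 b, R s s'}

variable {R : ℝ → ℝ → Prop} {a b : ℝ} {z : ℝ × ℝ}

theorem bddAbove_leftEnds : BddAbove (leftEnds R a b z) :=
  bddAbove_Icc.mono (sep_subset _ _)

theorem isCompact_leftEnds (hR : IsClosed {p : ℝ × ℝ | R p.1 p.2}) :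
    IsCompact (leftEnds R a b z) := by
  have himage : leftEnds R a b z =
      Prod.fst '' (Icc a (min z.1 z.2) ×ˢ Icc z.1 b ∩ {p | R p.1 p.2}) := by
    ext s
    constructor
    · rintro ⟨hs, s', hs', h⟩
      exact ⟨(s, s'), ⟨⟨hs, hs'⟩, h⟩, rfl⟩
    · rintro ⟨⟨s, s'⟩, ⟨⟨hs, hs'⟩, h⟩, rfl⟩
      exact ⟨hs, s', hs', h⟩
  rw [himage]
  exact ((isCompact_Icc.prod isCompact_Icc).inter_right hR).image continuous_fst

theorem sSup_leftEnds_mem (hR : IsClosed {p : ℝ × ℝ | R p.1 p.2}) (hab : R a b)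
    (hz : z ∈ Icc a b ×ˢ Icc a b) : sSup (leftEnds R a b z) ∈ leftEnds R a b z :=
  (isCompact_leftEnds hR).sSup_mem
    ⟨a, ⟨le_rfl, le_min hz.1.1 hz.2.1⟩, b, ⟨hz.1.2, le_rfl⟩, hab⟩

theorem sSup_leftEnds_of_min_eq {t τ : ℝ} (hab : R a b) (htb : t ≤ b) (htτ : min t τ = a) :
    sSup (leftEnds R a b (t, τ)) = a :=
  IsGreatest.csSup_eq
    ⟨⟨⟨le_rfl, htτ.ge⟩, b, ⟨htb, le_rfl⟩, hab⟩, fun _ hs => hs.1.2.trans htτ.le⟩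

theorem sSup_leftEnds_of_snd_eq {t : ℝ} (htt : R t t) (ht : t ∈ Icc a b) :
    sSup (leftEnds R a b (t, b)) = t :=
  IsGreatest.csSup_eq ⟨⟨⟨ht.1, le_min le_rfl ht.2⟩, t, ⟨le_rfl, ht.2⟩, htt⟩,
    fun _ hs => hs.1.2.trans (min_le_left _ _)⟩

namespace IsCancellation

variable {f : ℝ → X}

theorem map_eq_map_sSup_leftEnds_of_tendsto (hR : IsCancellation f R) (hab : R a b)
    (hz : z ∈ Icc a b ×ˢ Icc a b) {l : Filter (ℝ × ℝ)} [l.NeBot] (hl : l ≤ nhds z) {s : ℝ}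
    (hs : s ∈ leftEnds R a b z)
    (hlim : Tendsto (fun y => sSup (leftEnds R a b y)) l (nhds s)) :
    f s = f (sSup (leftEnds R a b z)) := by
  by_contra hne
  have hlt : s < sSup (leftEnds R a b z) :=
    (le_csSup bddAbove_leftEnds hs).lt_of_ne fun h => hne (congrArg f h)
  obtain ⟨hsz, s', hs', hss'⟩ := hs
  obtain ⟨hq, q', hq', hqq'⟩ := sSup_leftEnds_mem hR.isClosed hab hz
  obtain ⟨x, hx, x', hx', hxx'⟩ := hR.between hss' hqq' hne hlt
  have hxz : x < min z.1 z.2 := hx.2.trans_le hq.2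
  have hzx' : z.1 < x' := (le_min hs'.1 hq'.1).trans_lt hx'.1
  have hfst : Tendsto Prod.fst l (nhds z.1) := (continuous_fst.tendsto z).mono_left hl
  have hsnd : Tendsto Prod.snd l (nhds z.2) := (continuous_snd.tendsto z).mono_left hl
  have hle : ∀ᶠ y in l, x ≤ sSup (leftEnds R a b y) := by
    filter_upwards [(hfst.min hsnd).eventually_const_lt hxz, hfst.eventually_lt_const hzx']
      with y hxy hyx'
    exact le_csSup bddAbove_leftEnds ⟨⟨hsz.1.trans hx.1.le, hxy.le⟩, x',
      ⟨hyx'.le, hx'.2.le.trans (max_le hs'.2 hq'.2)⟩, hxx'⟩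
  exact hx.1.not_ge (ge_of_tendsto hlim hle)

theorem continuousOn_comp_sSup_leftEnds [TopologicalSpace X] (hR : IsCancellation f R)
    (hab : R a b) (hf : ContinuousOn f (Icc a b)) :
    ContinuousOn (fun z => f (sSup (leftEnds R a b z))) (Icc a b ×ˢ Icc a b) := by
  set σ : ℝ × ℝ → ℝ := fun z => sSup (leftEnds R a b z)
  have hσ (y : ℝ × ℝ) (hy : y ∈ Icc a b ×ˢ Icc a b) : σ y ∈ leftEnds R a b y :=
    sSup_leftEnds_mem hR.isClosed hab hy
  choose! hσIcc σ' hσ' hσσ' using hσ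
  intro z hz
  refine (tendsto_iff_ultrafilter _ _ _).2 fun l hl => ?_
  have hlz : (l : Filter (ℝ × ℝ)) ≤ nhds z := hl.trans nhdsWithin_le_nhds
  have hlD : ∀ᶠ y in l, y ∈ Icc a b ×ˢ Icc a b := hl self_mem_nhdsWithin
  have hσmem : ∀ᶠ y in l, (σ y, σ' y) ∈ Icc a b ×ˢ Icc a b := hlD.mono fun y hy =>
    ⟨⟨(hσIcc y hy).1, (hσIcc y hy).2.trans ((min_le_left _ _).trans hy.1.2)⟩,
      ⟨hy.1.1.trans (hσ' y hy).1, (hσ' y hy).2⟩⟩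
  obtain ⟨⟨s, s'⟩, ⟨hs, hs'⟩, hlim⟩ := (isCompact_Icc.prod isCompact_Icc).ultrafilter_le_nhds'
    (l.map fun y => (σ y, σ' y)) hσmem
  obtain ⟨hσs, hσ's'⟩ : Tendsto σ l (nhds s) ∧ Tendsto σ' l (nhds s') :=
    (Prod.tendsto_iff _ _).1 hlim
  have hfst : Tendsto Prod.fst l (nhds z.1) := (continuous_fst.tendsto z).mono_left hlz
  have hsnd : Tendsto Prod.snd l (nhds z.2) := (continuous_snd.tendsto z).mono_left hlz
  have hsz : s ∈ leftEnds R a b z :=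
    ⟨⟨hs.1, le_of_tendsto_of_tendsto hσs (hfst.min hsnd) (hlD.mono fun y hy => (hσIcc y hy).2)⟩,
      s', ⟨le_of_tendsto_of_tendsto hfst hσ's' (hlD.mono fun y hy => (hσ' y hy).1), hs'.2⟩,
      hR.isClosed.mem_of_tendsto (hσs.prodMk_nhds hσ's') (hlD.mono hσσ')⟩
  have hfs : f s = f (σ z) := hR.map_eq_map_sSup_leftEnds_of_tendsto hab hz hlz hsz hσs
  have hfσ : Tendsto (f ∘ σ) l (nhds (f s)) := (hf s hs).tendsto.comp
    (tendsto_nhdsWithin_iff.2 ⟨hσs, hσmem.mono fun y hy => hy.1⟩)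
  rwa [hfs] at hfσ

end IsCancellation

/-- The restriction of `f` to `[a, b]` is a loop that contracts within its own image, relative to
its endpoints. Weak normality of a ρ-path says that no nondegenerate segment has this property. -/
def ContractsInImage [TopologicalSpace X] (f : ℝ → X) (a b : ℝ) : Prop :=
  ∃ H : ℝ × ℝ → X, ContinuousOn H (Icc a b ×ˢ Icc 0 1) ∧
    (∀ t ∈ Icc a b, H (t, 0) = f t) ∧
    (∀ t ∈ Icc a b, H (t, 1) = f a) ∧
    (∀ s ∈ Icc (0 : ℝ) 1, H (a, s) = f a ∧ H (b, s) = f b) ∧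
    ∀ p ∈ Icc a b ×ˢ Icc (0 : ℝ) 1, H p ∈ f '' Icc a b

namespace ContractsInImage

variable [TopologicalSpace X] {f g : ℝ → X}

theorem map_left_eq_map_right (h : ContractsInImage f a b) (hab : a ≤ b) : f a = f b := by
  obtain ⟨H, -, -, htop, hsides, -⟩ := h
  rw [← htop b (right_mem_Icc.2 hab), (hsides 1 (right_mem_Icc.2 zero_le_one)).2]

theorem congr (h : ContractsInImage f a b) (hab : a ≤ b) (hfg : EqOn f g (Icc a b)) :
    ContractsInImage g a b := by
  obtain ⟨H, hH, hbot, htop, hsides, himage⟩ := h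
  have hga := hfg (left_mem_Icc.2 hab)
  have hgb := hfg (right_mem_Icc.2 hab)
  exact ⟨H, hH, fun t ht => (hbot t ht).trans (hfg ht), fun t ht => (htop t ht).trans hga,
    fun s hs => ⟨(hsides s hs).1.trans hga, (hsides s hs).2.trans hgb⟩,
    fun p hp => hfg.image_eq ▸ himage p hp⟩

end ContractsInImage

theorem IsCancellation.contractsInImage [TopologicalSpace X] {f : ℝ → X}
    (hR : IsCancellation f R) (hab : a ≤ b) (hRab : R a b) (hf : ContinuousOn f (Icc a b)) :
    ContractsInImage f a b := by
  have hτ : MapsTo (fun p : ℝ × ℝ => (p.1, AffineMap.lineMap b a p.2)) (Icc a b ×ˢ Icc 0 1)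
      (Icc a b ×ˢ Icc a b) := fun p hp =>
    ⟨hp.1, (convex_Icc a b).lineMap_mem (right_mem_Icc.2 hab) (left_mem_Icc.2 hab) hp.2⟩
  refine ⟨fun p => f (sSup (leftEnds R a b (p.1, AffineMap.lineMap b a p.2))),
    (hR.continuousOn_comp_sSup_leftEnds hRab hf).comp (by fun_prop) hτ,
    fun t ht => ?_, fun t ht => ?_, fun s hs => ⟨?_, ?_⟩, fun p hp => ?_⟩
  · simp only [AffineMap.lineMap_apply_zero, sSup_leftEnds_of_snd_eq (hR.refl t) ht]
  · simp only [AffineMap.lineMap_apply_one, sSup_leftEnds_of_min_eq hRab ht.2 (min_eq_right ht.1)]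
  · have hs' := (hτ (x := (a, s)) ⟨left_mem_Icc.2 hab, hs⟩).2
    exact congrArg f (sSup_leftEnds_of_min_eq hRab hab (min_eq_left hs'.1))
  · obtain ⟨-, w, hw, hsw⟩ := sSup_leftEnds_mem hR.isClosed hRab
      (hτ (x := (b, s)) ⟨right_mem_Icc.2 hab, hs⟩)
    exact (hR.map_eq hsw).trans (congrArg f (hw.2.antisymm hw.1))
  · have h := (sSup_leftEnds_mem hR.isClosed hRab (hτ hp)).1
    exact mem_image_of_mem f ⟨h.1, h.2.trans ((min_le_left _ _).trans hp.1.2)⟩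

open MeasureTheory MeasureTheory.Measure in
theorem ContractsInImage.exists_isCancellation [MetricSpace X] [MeasurableSpace X] [BorelSpace X]
    {f : ℝ → X} {u v : ℝ} (huv : u ≤ v) (hfin : μH[1] (f '' Icc u v) ≠ ⊤)
    (hf : ContractsInImage f u v) :
    ∃ R : ℝ → ℝ → Prop, IsCancellation (fun t => f (projIcc u v huv t)) R ∧ R u v := by
  obtain ⟨H, hH, hbot, htop, hsides, himage⟩ := hf
  let Q : Set (ℝ × ℝ) := Icc u v ×ˢ Icc 0 1
  have hQ : Convex ℝ Q := (convex_Icc u v).prod (convex_Icc 0 1)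
  have : CompactSpace Q := isCompact_iff_compactSpace.1 (isCompact_Icc.prod isCompact_Icc)
  have : LocallyPathConnectedSpace Q := hQ.locallyPathConnectedSpace
  have : ContractibleSpace Q := hQ.contractibleSpace ⟨(u, 0), by simp [Q, huv]⟩
  have : PreconnectedSpace (Icc u v) := Subtype.preconnectedSpace isPreconnected_Icc
  let point (t : Icc u v) (s : Icc (0 : ℝ) 1) : Q := ⟨(t, s), t.2, s.2⟩
  have hQfin : μH[1] (range (Q.domRestrict H)) ≠ ⊤ :=
    measure_ne_top_of_subset (range_subset_iff.2 fun z => himage z z.2) hfin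
  have hR := isCancellation_connectedInFibre hH.domRestrict hQfin
    (β := fun t => point (projIcc u v huv t) 0) (by fun_prop)
  have hfibre : ConnectedInFibre (Q.domRestrict H) (point ⟨u, left_mem_Icc.2 huv⟩ 0)
      (point ⟨v, right_mem_Icc.2 huv⟩ 0) :=
    .trans (.of_continuous (γ := point ⟨u, left_mem_Icc.2 huv⟩) (p := f u) (by fun_prop)
      (fun s => (hsides s s.2).1) 0 1) <|
    .trans (.of_continuous (γ := fun t => point t 1) (p := f u) (by fun_prop)
      (fun t => htop t t.2) _ _) <|
    .of_continuous (γ := point ⟨v, right_mem_Icc.2 huv⟩) (p := f v) (by fun_prop)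
      (fun s => (hsides s s.2).2) 1 0
  have hcomp : Q.domRestrict H ∘ (fun t => point (projIcc u v huv t) 0)
      = fun t => f (projIcc u v huv t) := funext fun t => hbot _ (projIcc u v huv t).2
  exact ⟨_, hcomp ▸ hR, by simpa only [projIcc_left, projIcc_right] using hfibre⟩

open MeasureTheory MeasureTheory.Measure in
theorem ContractsInImage.exists_strict_subloop [MetricSpace X] [MeasurableSpace X] [BorelSpace X]
    {f : ℝ → X} {u v q : ℝ} (hf : ContractsInImage f u v) (hfc : ContinuousOn f (Icc u v))
    (hfin : μH[1] (f '' Icc u v) ≠ ⊤) (hq : q ∈ Icc u v) (hqu : f q ≠ f u) :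
    ∃ a b, u < a ∧ a < b ∧ b < v ∧ ContractsInImage f a b := by
  have huv : u ≤ v := hq.1.trans hq.2
  have hproj : EqOn (fun t => f (projIcc u v huv t)) f (Icc u v) := fun t ht => by
    simp only [projIcc_of_mem huv ht]
  obtain ⟨R, hR, hRuv⟩ := hf.exists_isCancellation huv hfin
  have huq : u < q := hq.1.lt_of_ne fun h => hqu (h ▸ rfl)
  have hne : f (projIcc u v huv u) ≠ f (projIcc u v huv q) := by
    simpa only [hproj hq, hproj (left_mem_Icc.2 huv)] using hqu.symm
  obtain ⟨a, ha, b, hb, hab⟩ := hR.between hRuv (hR.refl q) hne huq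
  rw [min_eq_right hq.2, max_eq_left hq.2] at hb
  have hsub : Icc a b ⊆ Icc u v := Icc_subset_Icc ha.1.le hb.2.le
  have hlt : a < b := ha.2.trans hb.1
  exact ⟨a, b, ha.1, hlt, hb.2, (hR.contractsInImage hlt.le hab
    ((hfc.congr hproj).mono hsub)).congr hlt.le (hproj.mono hsub)⟩

end Cancellation

section UnitSpeed

variable {X : Type*} [PseudoEMetricSpace X] {f : ℝ → X} {S : Set ℝ} {u v : ℝ}

theorem hasUnitSpeedOn_Icc_iff : HasUnitSpeedOn f (Icc u v) ↔
    ∀ s t : ℝ, u ≤ s → s ≤ t → t ≤ v → eVariationOn f (Icc s t) = ENNReal.ofReal (t - s) := by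
  simp only [HasUnitSpeedOn, hasConstantSpeedOnWith_iff_ordered, NNReal.coe_one, one_mul]
  refine ⟨fun h s t hs hst ht => ?_, fun h s hs t ht hst => ?_⟩
  · rw [← h ⟨hs, hst.trans ht⟩ ⟨hs.trans hst, ht⟩ hst,
      inter_eq_right.2 (Icc_subset_Icc hs ht)]
  · rw [inter_eq_right.2 (Icc_subset_Icc hs.1 ht.2), h s t hs.1 hst ht.2]

theorem lipschitzOnWith_one_of_hasUnitSpeedOn (hf : HasUnitSpeedOn f S) :
    LipschitzOnWith 1 f S := by
  have hle {s t : ℝ} (hs : s ∈ S) (ht : t ∈ S) (hst : s ≤ t) : edist (f s) (f t) ≤ edist s t := by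
    calc edist (f s) (f t) ≤ eVariationOn f (S ∩ Icc s t) :=
          eVariationOn.edist_le f ⟨hs, left_mem_Icc.2 hst⟩ ⟨ht, right_mem_Icc.2 hst⟩
      _ = ENNReal.ofReal (t - s) := by rw [hf hs ht, NNReal.coe_one, one_mul]
      _ = edist s t := by
          rw [edist_comm, edist_dist, Real.dist_eq, abs_of_nonneg (sub_nonneg.2 hst)]
  intro s hs t ht
  rw [ENNReal.coe_one, one_mul]
  rcases le_total s t with hst | hts
  · exact hle hs ht hst
  · rw [edist_comm (f s), edist_comm s]
    exact hle ht hs hts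

theorem exists_edist_ne_zero_of_hasUnitSpeedOn (hf : HasUnitSpeedOn f S) (hu : u ∈ S)
    (hv : v ∈ S) (huv : u < v) : ∃ q ∈ S ∩ Icc u v, edist (f q) (f u) ≠ 0 := by
  by_contra! hconst
  have hvar := hf hu hv
  rw [(eVariationOn.eq_zero_iff f).2 fun s hs t ht => ?_] at hvar
  · rw [NNReal.coe_one, one_mul, eq_comm, ENNReal.ofReal_eq_zero] at hvar
    linarith
  · refine nonpos_iff_eq_zero.1 ((edist_triangle_right _ _ (f u)).trans ?_)
    rw [hconst s hs, hconst t ht, add_zero]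

theorem hasUnitSpeedOn_Icc_of_Ico (hf : HasUnitSpeedOn f (Ico u v))
    (hv : ContinuousWithinAt f (Icc u v) v) : HasUnitSpeedOn f (Icc u v) := by
  have hIco {s t : ℝ} (hs : u ≤ s) (hst : s ≤ t) (ht : t < v) :
      eVariationOn f (Icc s t) = ENNReal.ofReal (t - s) := by
    have h := hf ⟨hs, hst.trans_lt ht⟩ ⟨hs.trans hst, ht⟩
    rwa [inter_eq_right.2 (Icc_subset_Ico_right ht |>.trans (Ico_subset_Ico_left hs)),
      NNReal.coe_one, one_mul] at h
  refine hasUnitSpeedOn_Icc_iff.2 fun s t hs hst ht => ?_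
  rcases ht.lt_or_eq with ht | rfl
  · exact hIco hs hst ht
  rcases hst.eq_or_lt with rfl | hst
  · rw [sub_self, ENNReal.ofReal_zero, Icc_self]
    exact eVariationOn.constant_on (subsingleton_singleton.image f)
  refine le_antisymm ?_ ?_
  · rw [← eVariationOn.eVariationOn_Ico_eq_Icc_of_continuousWithinAt
      ((continuousWithinAt_Icc_iff_Iic (hs.trans_lt hst)).1 hv)]
    calc eVariationOn f (Ico s t) ≤ eVariationOn id (Ico s t) := by
          simpa only [ENNReal.coe_one, one_mul, Function.comp_id] using
            (lipschitzOnWith_one_of_hasUnitSpeedOn hf).comp_eVariationOn_le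
              (g := id) (s := Ico s t) (fun x hx => ⟨hs.trans hx.1, hx.2⟩)
      _ ≤ eVariationOn id (Icc s t) := eVariationOn.mono _ Ico_subset_Icc_self
      _ = ENNReal.ofReal (t - s) := eVariationOn_id_Icc s t
  · have hlim : Tendsto (fun x => ENNReal.ofReal (x - s)) (nhdsWithin t (Iio t))
        (nhds (ENNReal.ofReal (t - s))) :=
      (ENNReal.continuous_ofReal.comp (continuous_id.sub continuous_const)).continuousWithinAt
    refine le_of_tendsto hlim ?_
    filter_upwards [Ioo_mem_nhdsLT hst] with x hx
    rw [← hIco hs hx.1.le hx.2]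
    exact eVariationOn.mono _ (Icc_subset_Icc_right hx.2.le)

end UnitSpeed

namespace RPath

variable {X : Type*} [MetricSpace X]

section

variable (c c₁ c₂ : RPath X)

theorem hasUnitSpeedOn : HasUnitSpeedOn c.toFun (Icc 0 c.len) :=
  hasUnitSpeedOn_Icc_iff.2 c.arclength

theorem not_contractsInImage {u v : ℝ} (hu : 0 ≤ u) (huv : u < v) (hv : v ≤ c.len) :
    ¬ ContractsInImage c.toFun u v := fun h =>
  c.weaklyNormal ⟨u, v, hu, huv, hv, h.map_left_eq_map_right huv.le, h⟩

theorem wedgeLen_nonneg : 0 ≤ wedgeLen c₁ c₂ :=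
  Real.sSup_nonneg fun _ hb => hb.1

theorem wedgeLen_le_left : wedgeLen c₁ c₂ ≤ c₁.len :=
  Real.sSup_le (fun _ hb => hb.2.1) c₁.len_nonneg

theorem wedgeLen_le_right : wedgeLen c₁ c₂ ≤ c₂.len :=
  Real.sSup_le (fun _ hb => hb.2.2.1) c₂.len_nonneg

theorem abs_len_sub_len_le_rhoDist : |c₁.len - c₂.len| ≤ rhoDist c₁ c₂ := by
  have hleft := wedgeLen_le_left c₁ c₂
  have hright := wedgeLen_le_right c₁ c₂
  rw [rhoDist, abs_le]
  constructor <;> linarith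

end

variable {c₁ c₂ : RPath X} {l : ℝ}

theorem le_wedgeLen (hl : 0 ≤ l) (hl₁ : l ≤ c₁.len) (hl₂ : l ≤ c₂.len)
    (h : EqOn c₁.toFun c₂.toFun (Icc 0 l)) : l ≤ wedgeLen c₁ c₂ :=
  le_csSup ⟨c₁.len, fun _ hb => hb.2.1⟩ ⟨hl, hl₁, hl₂, h⟩

theorem eqOn_of_lt_wedgeLen (hl : l < wedgeLen c₁ c₂) : EqOn c₁.toFun c₂.toFun (Icc 0 l) := by
  intro t ht
  obtain ⟨b, hb, hlb⟩ : ∃ b ∈ {b : ℝ | 0 ≤ b ∧ b ≤ c₁.len ∧ b ≤ c₂.len ∧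
      ∀ t ∈ Icc 0 b, c₁.toFun t = c₂.toFun t}, l < b := by
    refine exists_lt_of_lt_csSup (nonempty_iff_ne_empty.2 fun hempty => ?_) hl
    rw [wedgeLen, hempty, Real.sSup_empty] at hl
    exact hl.not_ge (ht.1.trans ht.2)
  exact hb.2.2.2 t ⟨ht.1, ht.2.trans hlb.le⟩

/-- The ρ-path given by a unit speed curve on `[0, L]` without contractible segments. Outside
`[0, L]` the curve is replaced by constants, as the encoding of ρ-paths demands. -/
noncomputable def ofUnitSpeed {d : ℝ → X} {L : ℝ} (hL : 0 ≤ L) (hspeed : HasUnitSpeedOn d (Icc 0 L))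
    (hnormal : ∀ u v : ℝ, 0 ≤ u → u < v → v ≤ L → ¬ ContractsInImage d u v) : RPath X :=
  have hproj : EqOn (fun t => d (projIcc 0 L hL t)) d (Icc 0 L) := fun t ht => by
    simp only [projIcc_of_mem hL ht]
  { len := L
    len_nonneg := hL
    toFun := fun t => d (projIcc 0 L hL t)
    contOn := (lipschitzOnWith_one_of_hasUnitSpeedOn hspeed).continuousOn.congr hproj
    arclength := fun s t hs hst ht => by
      rw [eVariationOn.congr (hproj.mono (Icc_subset_Icc hs ht)),
        hasUnitSpeedOn_Icc_iff.1 hspeed s t hs hst ht]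
    clamp_left := fun t ht => by rw [projIcc_of_le_left hL ht, projIcc_left]
    clamp_right := fun t ht => by rw [projIcc_of_right_le hL ht, projIcc_right]
    weaklyNormal := by
      rintro ⟨u, v, hu, huv, hv, -, hcontr⟩
      exact hnormal u v hu huv hv
        (ContractsInImage.congr hcontr huv.le (hproj.mono (Icc_subset_Icc hu hv))) }

theorem eqOn_ofUnitSpeed {d : ℝ → X} {L : ℝ} (hL : 0 ≤ L) (hspeed : HasUnitSpeedOn d (Icc 0 L))
    (hnormal : ∀ u v : ℝ, 0 ≤ u → u < v → v ≤ L → ¬ ContractsInImage d u v) :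
    EqOn (ofUnitSpeed hL hspeed hnormal).toFun d (Icc 0 L) := fun t ht => by
  simp only [ofUnitSpeed, projIcc_of_mem hL ht]

end RPath

section Limit

theorem exists_eventually_eqOn_of_stable {X : Type*} {F : ℕ → ℝ → X} {a L : ℝ} (q : X)
    (h : ∀ l < L, ∃ N, ∀ m ≥ N, ∀ n ≥ N, EqOn (F m) (F n) (Icc a l)) :
    ∃ d : ℝ → X, d L = q ∧ ∀ l < L, ∀ᶠ n in atTop, EqOn (F n) d (Icc a l) := by
  choose! N hN using h
  refine ⟨fun t => if t < L then F (N t) t else q, if_neg (lt_irrefl L), fun l hl => ?_⟩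
  filter_upwards [eventually_ge_atTop (N l)] with n hn t ht
  have htL : t < L := ht.2.trans_lt hl
  calc F n t = F (max n (N t)) t := hN l hl n hn _ (hn.trans (le_max_left _ _)) ht
    _ = F (N t) t := hN t htL _ (le_max_right _ _) _ le_rfl ⟨ht.1, le_rfl⟩
    _ = if t < L then F (N t) t else q := (if_pos htL).symm

variable {X : Type*} [MetricSpace X]

/-- The curve `d` agrees with ρ-paths on all intervals `[0, l]` with `l < L`. This is what survives
in the limit of a Cauchy sequence of ρ-paths whose lengths tend to `L`. -/
def IsLocallyRho (d : ℝ → X) (L : ℝ) : Prop :=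
  ∀ l ∈ Ico 0 L, ∃ c : RPath X, l ≤ c.len ∧ EqOn c.toFun d (Icc 0 l)

namespace IsLocallyRho

variable {d : ℝ → X} {L : ℝ}

theorem hasUnitSpeedOn_Ico (hd : IsLocallyRho d L) : HasUnitSpeedOn d (Ico 0 L) := by
  refine hasConstantSpeedOnWith_iff_ordered.2 fun s hs t ht hst => ?_
  obtain ⟨c, hct, hcd⟩ := hd t ht
  rw [inter_eq_right.2 (Icc_subset_Ico_right ht.2 |>.trans (Ico_subset_Ico_left hs.1)),
    ← eVariationOn.congr (hcd.mono (Icc_subset_Icc_left hs.1)), NNReal.coe_one, one_mul,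
    c.arclength s t hs.1 hst hct]

theorem hasUnitSpeedOn_Icc (hd : IsLocallyRho d L)
    (hL : ContinuousWithinAt d (Icc 0 L) L) : HasUnitSpeedOn d (Icc 0 L) :=
  hasUnitSpeedOn_Icc_of_Ico hd.hasUnitSpeedOn_Ico hL

-- A contractible segment may end at `L`, but the strict subloop it contains does not.
theorem not_contractsInImage (hd : IsLocallyRho d L) (hL : ContinuousWithinAt d (Icc 0 L) L)
    {u v : ℝ} (hu : 0 ≤ u) (huv : u < v) (hv : v ≤ L) : ¬ ContractsInImage d u v := by
  intro hcontr
  borelize X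
  have hspeed := hd.hasUnitSpeedOn_Icc hL
  have hlip : LipschitzOnWith 1 d (Icc u v) :=
    (lipschitzOnWith_one_of_hasUnitSpeedOn hspeed).mono (Icc_subset_Icc hu hv)
  obtain ⟨q, ⟨-, hq⟩, hqu⟩ := exists_edist_ne_zero_of_hasUnitSpeedOn hspeed
    ⟨hu, huv.le.trans hv⟩ ⟨hu.trans huv.le, hv⟩ huv
  obtain ⟨a, b, hua, hab, hbv, hsub⟩ := hcontr.exists_strict_subloop hlip.continuousOn
    (hausdorffMeasure_one_image_Icc_ne_top hlip) hq (edist_pos.1 (pos_iff_ne_zero.2 hqu))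
  have ha : 0 ≤ a := hu.trans hua.le
  obtain ⟨c, hcb, hcd⟩ := hd b ⟨ha.trans hab.le, hbv.trans_le hv⟩
  exact c.not_contractsInImage ha hab hcb
    (hsub.congr hab.le (hcd.symm.mono (Icc_subset_Icc_left ha)))

end IsLocallyRho

theorem continuousWithinAt_right_of_dist_le {d : ℝ → X} {a L : ℝ}
    (h : ∀ t ∈ Ico a L, dist (d t) (d L) ≤ L - t) : ContinuousWithinAt d (Icc a L) L := by
  have hlim : Tendsto (fun t => L - t) (nhdsWithin L (Icc a L)) (nhds 0) := by
    have h : Tendsto (fun t => L - t) (nhds L) (nhds (L - L)) :=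
      tendsto_const_nhds.sub tendsto_id
    exact (sub_self L ▸ h).mono_left nhdsWithin_le_nhds
  refine tendsto_iff_dist_tendsto_zero.2
    (squeeze_zero' (Eventually.of_forall fun _ => dist_nonneg) ?_ hlim)
  filter_upwards [self_mem_nhdsWithin] with t ht
  rcases ht.2.lt_or_eq with htL | rfl
  · exact h t ⟨ht.1, htL⟩
  · rw [dist_self, sub_self]

end Limit

namespace RPath

variable {X : Type*} [MetricSpace X] {c : ℕ → RPath X} {d : RPath X} {L : ℝ}

theorem tendsto_rhoDist_zero (hlen : Tendsto (fun n => (c n).len) atTop (nhds d.len))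
    (hd : ∀ l < d.len, ∀ᶠ n in atTop, EqOn (c n).toFun d.toFun (Icc 0 l)) :
    Tendsto (fun n => rhoDist (c n) d) atTop (nhds 0) := by
  have hwedge : Tendsto (fun n => wedgeLen (c n) d) atTop (nhds d.len) := by
    refine tendsto_order.2 ⟨fun l hl => ?_, fun l hl => Eventually.of_forall fun n =>
      (wedgeLen_le_right (c n) d).trans_lt hl⟩
    obtain ⟨l', hll', hl'⟩ := exists_between hl
    filter_upwards [hd l' hl', hlen.eventually_const_lt hl'] with n heq hn
    rcases lt_or_ge l' 0 with hneg | hpos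
    · exact hll'.trans (hneg.trans_le (wedgeLen_nonneg (c n) d))
    · exact hll'.trans_le (le_wedgeLen hpos hn.le hl'.le heq)
  have hzero : d.len + d.len - 2 * d.len = 0 := by ring
  exact hzero ▸ (hlen.add_const d.len).sub (hwedge.const_mul 2)

theorem dist_le_of_tendsto_endpoint {x q : X} {t : ℝ}
    (hlen : Tendsto (fun n => (c n).len) atTop (nhds L))
    (hend : Tendsto (fun n => (c n).toFun (c n).len) atTop (nhds q)) (ht : 0 ≤ t)
    (htlen : ∀ᶠ n in atTop, t ≤ (c n).len) (hx : ∀ᶠ n in atTop, (c n).toFun t = x) :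
    dist x q ≤ L - t := by
  refine le_of_tendsto_of_tendsto (tendsto_const_nhds.dist hend) (hlen.sub_const t) ?_
  filter_upwards [htlen, hx] with n hn hxn
  have hlip := (lipschitzOnWith_one_of_hasUnitSpeedOn (c n).hasUnitSpeedOn).dist_le_mul
    t ⟨ht, hn⟩ (c n).len ⟨(c n).len_nonneg, le_rfl⟩
  rwa [hxn, NNReal.coe_one, one_mul, dist_comm t, Real.dist_eq,
    abs_of_nonneg (sub_nonneg.2 hn)] at hlip

theorem exists_tendsto_len
    (hcauchy : ∀ ε : ℝ, 0 < ε → ∃ N : ℕ, ∀ m ≥ N, ∀ n ≥ N, rhoDist (c m) (c n) < ε) :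
    ∃ L, 0 ≤ L ∧ Tendsto (fun n => (c n).len) atTop (nhds L) := by
  have hseq : CauchySeq fun n => (c n).len := by
    refine Metric.cauchySeq_iff.2 fun ε hε => ?_
    obtain ⟨N, hN⟩ := hcauchy ε hε
    exact ⟨N, fun m hm n hn => (abs_len_sub_len_le_rhoDist _ _).trans_lt (hN m hm n hn)⟩
  obtain ⟨L, hL⟩ := cauchySeq_tendsto_of_complete hseq
  exact ⟨L, ge_of_tendsto' hL fun n => (c n).len_nonneg, hL⟩

theorem exists_eqOn_of_lt_lim_len
    (hcauchy : ∀ ε : ℝ, 0 < ε → ∃ N : ℕ, ∀ m ≥ N, ∀ n ≥ N, rhoDist (c m) (c n) < ε)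
    (hlen : Tendsto (fun n => (c n).len) atTop (nhds L)) {l : ℝ} (hl : l < L) :
    ∃ N, ∀ m ≥ N, ∀ n ≥ N, EqOn (c m).toFun (c n).toFun (Icc 0 l) := by
  obtain ⟨l', hll', hl'⟩ := exists_between hl
  obtain ⟨N₁, hN₁⟩ := hcauchy (2 * (l' - l)) (by linarith)
  obtain ⟨N₂, hN₂⟩ := eventually_atTop.1 (hlen.eventually_const_lt hl')
  refine ⟨max N₁ N₂, fun m hm n hn => eqOn_of_lt_wedgeLen ?_⟩
  have hdist := hN₁ m (le_of_max_le_left hm) n (le_of_max_le_left hn)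
  rw [rhoDist] at hdist
  linarith [hN₂ m (le_of_max_le_right hm), hN₂ n (le_of_max_le_right hn)]

theorem exists_limit_of_eventually_eqOn {p q : X} {d : ℝ → X}
    (hstart : ∀ n, (c n).StartsAt p)
    (hend : Tendsto (fun n => (c n).toFun (c n).len) atTop (nhds q)) (hL : 0 ≤ L)
    (hlen : Tendsto (fun n => (c n).len) atTop (nhds L)) (hdL : d L = q)
    (hd : ∀ l < L, ∀ᶠ n in atTop, EqOn (c n).toFun d (Icc 0 l)) :
    ∃ e : RPath X, e.len = L ∧ e.StartsAt p ∧ e.EndsAt q ∧ EqOn e.toFun d (Icc 0 L) := by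
  have hcont : ContinuousWithinAt d (Icc 0 L) L := by
    refine continuousWithinAt_right_of_dist_le fun t ht => ?_
    rw [hdL]
    exact dist_le_of_tendsto_endpoint hlen hend ht.1
      ((hlen.eventually_const_lt ht.2).mono fun _ => le_of_lt)
      ((hd t ht.2).mono fun _ h => h ⟨ht.1, le_rfl⟩)
  have hrho : IsLocallyRho d L := fun l hl => by
    obtain ⟨n, hlt, heq⟩ := ((hlen.eventually_const_lt hl.2).and (hd l hl.2)).exists
    exact ⟨c n, hlt.le, heq⟩
  have hd0 : d 0 = p := by
    rcases hL.eq_or_lt with rfl | hLpos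
    · have hpq : dist p q ≤ 0 - 0 := dist_le_of_tendsto_endpoint hlen hend le_rfl
        (Eventually.of_forall fun n => (c n).len_nonneg) (Eventually.of_forall hstart)
      rw [hdL, dist_le_zero.1 (hpq.trans_eq (sub_self 0))]
    · obtain ⟨n, hn⟩ := (hd 0 hLpos).exists
      rw [← hn ⟨le_rfl, le_rfl⟩, hstart n]
  have heq := eqOn_ofUnitSpeed hL (hrho.hasUnitSpeedOn_Icc hcont)
    fun u v hu huv hv => hrho.not_contractsInImage hcont hu huv hv
  exact ⟨_, rfl, (heq (left_mem_Icc.2 hL)).trans hd0, (heq (right_mem_Icc.2 hL)).trans hdL, heq⟩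

end RPath

theorem rhoLoopGroup_complete_general {X : Type*} [MetricSpace X] {p q : X} (c : ℕ → RPath X)
    (hstart : ∀ n, (c n).StartsAt p)
    (hend : Tendsto (fun n => (c n).toFun (c n).len) atTop (nhds q))
    (hcauchy : ∀ ε : ℝ, 0 < ε → ∃ N : ℕ, ∀ m ≥ N, ∀ n ≥ N,
      RPath.rhoDist (c m) (c n) < ε) :
    ∃ d : RPath X, d.StartsAt p ∧ d.EndsAt q ∧
      Tendsto (fun n => (c n).len) atTop (nhds d.len) ∧
      (∀ L' : ℝ, 0 ≤ L' → L' < d.len → ∃ N : ℕ, ∀ n ≥ N,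
        ∀ t ∈ Icc 0 L', (c n).toFun t = d.toFun t) ∧
      Tendsto (fun n => RPath.rhoDist (c n) d) atTop (nhds 0) := by
  obtain ⟨L, hL, hlen⟩ := RPath.exists_tendsto_len hcauchy
  obtain ⟨f, hfL, hf⟩ := exists_eventually_eqOn_of_stable q fun l hl =>
    RPath.exists_eqOn_of_lt_lim_len hcauchy hlen hl
  obtain ⟨d, rfl, hdp, hdq, hdf⟩ :=
    RPath.exists_limit_of_eventually_eqOn hstart hend hL hlen hfL hf
  have hd (l : ℝ) (hl : l < d.len) : ∀ᶠ n in atTop, EqOn (c n).toFun d.toFun (Icc 0 l) :=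
    (hf l hl).mono fun n hn => hn.trans (hdf.symm.mono (Icc_subset_Icc_right hl.le))
  exact ⟨d, hdp, hdq, hlen, fun l _ hl => eventually_atTop.1 (hd l hl),
    RPath.tendsto_rhoDist_zero hlen hd⟩

/-- For a length space `X`, the group `Λ(X)` of ρ-loops at the
basepoint, with the metric `d(c₁,c₂) = L(c₁)+L(c₂)-2L(c₁∧c₂)`, is complete: every
Cauchy sequence `(cᵢ)` of ρ-loops has lengths converging to some `L ≥ 0`, stabilizes
on every interval `[0,L′]` with `L′ < L`, and the limit loop defined by these stable
values is again a ρ-loop, to which the sequence converges. -/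
theorem rhoLoopGroup_complete {X : Type*} [MetricSpace X] (hX : IsLengthSpace X)
    (base : X) (c : ℕ → RPath X)
    (hstart : ∀ n, (c n).StartsAt base) (hloop : ∀ n, (c n).EndsAt base)
    (hcauchy : ∀ ε : ℝ, 0 < ε → ∃ N : ℕ, ∀ m ≥ N, ∀ n ≥ N,
      RPath.rhoDist (c m) (c n) < ε) :
    ∃ d : RPath X, d.StartsAt base ∧ d.EndsAt base ∧
      Tendsto (fun n => (c n).len) atTop (nhds d.len) ∧
      (∀ L' : ℝ, 0 ≤ L' → L' < d.len → ∃ N : ℕ, ∀ n ≥ N,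
        ∀ t ∈ Icc 0 L', (c n).toFun t = d.toFun t) ∧
      Tendsto (fun n => RPath.rhoDist (c n) d) atTop (nhds 0) :=
  rhoLoopGroup_complete_general c hstart
    (tendsto_const_nhds.congr fun n => (hloop n).symm) hcauchy
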